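/- For every level t there exists a finite set {u₁, …, uₙ} of wellformed sublevels (possibly empty) such that for every valuation σ, ⟦t⟧σ = max(⟦u₁⟧σ, …, ⟦uₙ⟧σ), where the maximum over the empty set is 0. -/

import Mathlib

/-- The impredicative maximum on natural numbers. -/
def imaxN : ℕ → ℕ → ℕ
  | _, 0 => 0
  | i, (j+1) => max i (j+1)

/-- Levels: t ::= 0 | s(t) | x | max(t,t) | imax(t,t). -/
inductive Lvl where
  | zero : Lvl
  | succ : Lvl → Lvl
  | var : ℕ → Lvl
  | lmax : Lvl → Lvl → Lvl
  | limax : Lvl → Lvl → Lvl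

/-- Value of a level under a valuation. -/
def evalL (σ : ℕ → ℕ) : Lvl → ℕ
  | .zero => 0
  | .succ t => evalL σ t + 1
  | .var x => σ x
  | .lmax u v => max (evalL σ u) (evalL σ v)
  | .limax u v => imaxN (evalL σ u) (evalL σ v)

/-- Maximum of a list of naturals, 0 for the empty list. -/
def listMax (l : List ℕ) : ℕ := l.foldr max 0

/-- Sublevels A(E,x,S) and B(E,S). -/
inductive SubLvl where
  | A : Finset ℕ → ℕ → ℕ → SubLvl
  | B : Finset ℕ → ℕ → SubLvl
deriving DecidableEq

/-- Value of a sublevel under a valuation. -/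
def evalS (σ : ℕ → ℕ) : SubLvl → ℕ
  | .A E x S => if ∃ y ∈ E, σ y = 0 then 0 else σ x + S
  | .B E S => if ∃ y ∈ E, σ y = 0 then 0 else S

/-- Wellformed sublevels. -/
def Wf : SubLvl → Prop
  | .A E x _ => x ∈ E
  | .B _ S => 0 < S

/-- Semantic comparison of sublevels. -/
def leT (u v : SubLvl) : Prop := ∀ σ : ℕ → ℕ, evalS σ u ≤ evalS σ v

/-!
The class of maxima of wellformed sublevels, as functions of the valuation, contains the constants
and the variables and is closed under `max`, so it remains to treat successor and `imax`. Write
`gate i j` for `0` if `j = 0` and `i` otherwise. Then `n + k = max k (gate (n + k) n)` and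
`imax i j = max j (gate i j)`. Both gated terms are monotone and vanish at `0` in each variable, and
so distribute over finite maxima. On single sublevels they are realised syntactically, because a
wellformed sublevel takes the value `0` exactly when one of its guarding variables does.
-/

/-- The value `i`, switched off when `j = 0`: the part of `imax i j` that depends on `i`. -/
def gate (i j : ℕ) : ℕ := if j = 0 then 0 else i

section Gate

theorem gate_zero_left (j : ℕ) : gate 0 j = 0 := ite_self 0

theorem gate_zero_right (i : ℕ) : gate i 0 = 0 := if_pos rfl

theorem gate_mono {i i' j j' : ℕ} (hi : i ≤ i') (hj : j ≤ j') : gate i j ≤ gate i' j' := by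
  unfold gate
  split_ifs <;> omega

theorem max_gate_add (n k : ℕ) : max k (gate (n + k) n) = n + k := by
  unfold gate
  split_ifs <;> omega

theorem imaxN_eq_max_gate (i j : ℕ) : imaxN i j = max j (gate i j) := by
  cases j with
  | zero => simp [imaxN, gate]
  | succ j => simp [imaxN, gate, max_comm]

variable {α β : Type*}

theorem gate_add_sup (U : Finset α) (f : α → ℕ) (k : ℕ) :
    gate (U.sup f + k) (U.sup f) = U.sup fun a => gate (f a + k) (f a) :=
  Finset.apply_sup_eq_sup_comp_of_linearOrder (fun n => gate (n + k) n)
    (fun _ _ h => gate_mono (Nat.add_le_add_right h k) h) (gate_zero_right _)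

theorem gate_sup_sup (U : Finset α) (V : Finset β) (f : α → ℕ) (g : β → ℕ) :
    gate (U.sup f) (V.sup g) = (U ×ˢ V).sup fun p => gate (f p.1) (g p.2) := by
  have sup_left (j : ℕ) : gate (U.sup f) j = U.sup fun a => gate (f a) j :=
    Finset.apply_sup_eq_sup_comp_of_linearOrder (gate · j) (fun _ _ h => gate_mono h le_rfl)
      (gate_zero_left j)
  have sup_right (i : ℕ) : gate i (V.sup g) = V.sup fun b => gate i (g b) :=
    Finset.apply_sup_eq_sup_comp_of_linearOrder (gate i) (fun _ _ h => gate_mono le_rfl h)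
      (gate_zero_right i)
  simp only [sup_left, sup_right, Finset.sup_product_left]

end Gate

namespace SubLvl

/-- The set `E` of a sublevel `A(E,x,S)` or `B(E,S)`: if one of these variables is zero, then so is
the sublevel. -/
def guards : SubLvl → Finset ℕ
  | .A E _ _ => E
  | .B E _ => E

/-- The sublevel with its numerical offset `S` increased by `k` and the same guards; for
wellformed `u` it realises `gate (u + k) u`. -/
def shift (k : ℕ) : SubLvl → SubLvl
  | .A E x S => .A E x (S + k)
  | .B E S => .B E (S + k)

/-- The sublevel with the variables of `F` as additional guards; with `F` the guards of a
wellformed `v` it realises `gate u v`. -/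
def addGuards (F : Finset ℕ) : SubLvl → SubLvl
  | .A E x S => .A (E ∪ F) x S
  | .B E S => .B (E ∪ F) S

variable {u v : SubLvl}

theorem wf_shift (hu : Wf u) (k : ℕ) : Wf (u.shift k) := by
  cases u with
  | A E x S => exact hu
  | B E S => exact Nat.add_pos_left hu k

theorem wf_addGuards (hu : Wf u) (F : Finset ℕ) : Wf (u.addGuards F) := by
  cases u with
  | A E x S => exact Finset.mem_union_left F hu
  | B E S => exact hu

theorem evalS_eq_zero_iff (hu : Wf u) (σ : ℕ → ℕ) :
    evalS σ u = 0 ↔ ∃ y ∈ u.guards, σ y = 0 := by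
  cases u with
  | A E x S =>
    by_cases guarded : ∃ y ∈ E, σ y = 0
    · simp only [evalS, guards, guarded, if_true]
    · have var_ne_zero : σ x ≠ 0 := fun h => guarded ⟨x, hu, h⟩
      simp [evalS, guards, iff_false_intro guarded, var_ne_zero]
  | B E S =>
    have offset_ne_zero : S ≠ 0 := Nat.ne_of_gt hu
    simp [evalS, guards, offset_ne_zero]

theorem evalS_shift (hu : Wf u) (k : ℕ) (σ : ℕ → ℕ) :
    evalS σ (u.shift k) = gate (evalS σ u + k) (evalS σ u) := by
  simp only [gate, evalS_eq_zero_iff hu]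
  cases u <;> simp only [evalS, shift, guards] <;> split_ifs <;> simp only [Nat.add_assoc]

theorem evalS_addGuards (u : SubLvl) (F : Finset ℕ) (σ : ℕ → ℕ) :
    evalS σ (u.addGuards F) = if ∃ y ∈ F, σ y = 0 then 0 else evalS σ u := by
  cases u <;> simp only [evalS, addGuards, Finset.mem_union, or_and_right, exists_or, ite_or] <;>
    split_ifs <;> rfl

theorem evalS_addGuards_guards (u : SubLvl) (hv : Wf v) (σ : ℕ → ℕ) :
    evalS σ (u.addGuards v.guards) = gate (evalS σ u) (evalS σ v) := by
  simp only [evalS_addGuards, gate, evalS_eq_zero_iff hv]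

end SubLvl

/-- `f`, a function of the valuation, is the maximum of a finite set of wellformed sublevels, where
the maximum of the empty set is `0`. -/
def IsMaxOfWf (f : (ℕ → ℕ) → ℕ) : Prop :=
  ∃ U : Finset SubLvl, (∀ u ∈ U, Wf u) ∧ ∀ σ : ℕ → ℕ, f σ = U.sup (evalS σ)

namespace IsMaxOfWf

theorem const (k : ℕ) : IsMaxOfWf fun _ => k := by
  obtain rfl | hk := Nat.eq_zero_or_pos k
  · exact ⟨∅, by simp, fun _ => rfl⟩
  · exact ⟨{.B ∅ k}, by simpa [Wf] using hk, fun σ => by simp [evalS]⟩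

theorem var (x : ℕ) : IsMaxOfWf fun σ => σ x :=
  ⟨{.A {x} x 0}, by simp [Wf], fun σ => by simp [evalS, eq_comm]⟩

variable {f g : (ℕ → ℕ) → ℕ}

theorem max (hf : IsMaxOfWf f) (hg : IsMaxOfWf g) : IsMaxOfWf fun σ => max (f σ) (g σ) := by
  obtain ⟨U, hU, hf⟩ := hf
  obtain ⟨V, hV, hg⟩ := hg
  refine ⟨U ∪ V, Finset.forall_mem_union.2 ⟨hU, hV⟩, fun σ => ?_⟩
  simp only [hf, hg, Finset.sup_union]

theorem gate_add (hf : IsMaxOfWf f) (k : ℕ) : IsMaxOfWf fun σ => gate (f σ + k) (f σ) := by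
  obtain ⟨U, hU, hf⟩ := hf
  refine ⟨U.image (SubLvl.shift k),
    Finset.forall_mem_image.2 fun u hu => SubLvl.wf_shift (hU u hu) k, fun σ => ?_⟩
  simp only [hf, gate_add_sup, Finset.sup_image]
  exact Finset.sup_congr rfl fun u hu => (SubLvl.evalS_shift (hU u hu) k σ).symm

theorem gate (hf : IsMaxOfWf f) (hg : IsMaxOfWf g) : IsMaxOfWf fun σ => gate (f σ) (g σ) := by
  obtain ⟨U, hU, hf⟩ := hf
  obtain ⟨V, hV, hg⟩ := hg
  refine ⟨(U ×ˢ V).image fun p => p.1.addGuards p.2.guards,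
    Finset.forall_mem_image.2 fun p hp =>
      SubLvl.wf_addGuards (hU _ (Finset.mem_product.1 hp).1) _, fun σ => ?_⟩
  simp only [hf, hg, gate_sup_sup, Finset.sup_image]
  exact Finset.sup_congr rfl fun p hp =>
    (SubLvl.evalS_addGuards_guards p.1 (hV _ (Finset.mem_product.1 hp).2) σ).symm

theorem add_const (hf : IsMaxOfWf f) (k : ℕ) : IsMaxOfWf fun σ => f σ + k := by
  simpa only [max_gate_add] using (const k).max (hf.gate_add k)

theorem imaxN (hf : IsMaxOfWf f) (hg : IsMaxOfWf g) : IsMaxOfWf fun σ => imaxN (f σ) (g σ) := by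
  simpa only [imaxN_eq_max_gate] using hg.max (hf.gate hg)

end IsMaxOfWf

theorem level_as_max_of_wf_sublevels (t : Lvl) :
    ∃ U : Finset SubLvl, (∀ u ∈ U, Wf u) ∧
      ∀ σ : ℕ → ℕ, evalL σ t = U.sup (evalS σ) := by
  change IsMaxOfWf fun σ => evalL σ t
  induction t with
  | zero => exact .const 0
  | succ t ht => exact ht.add_const 1
  | var x => exact .var x
  | lmax u v hu hv => exact hu.max hv
  | limax u v hu hv => exact hu.imaxN hv
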